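/- arXiv:0711.1135 — 2 statements merged into one kernel-verified Lean document; each statement's English description precedes it below -/
import Mathlib

section
/- Let Q be a tree quiver and V an indecomposable representation of Q over a field K. Then rkf(V) ≠ 0 if and only if V is isomorphic to the identity representation 𝟙_Q. -/
open Submodule

section Defs

variable {K : Type} [Field K]
variable {Q₀ Q₁ : Type} (tl hd : Q₁ → Q₀)
variable (Vx : Q₀ → Type) [∀ x, AddCommGroup (Vx x)] [∀ x, Module K (Vx x)]
variable (Va : ∀ a : Q₁, Vx (tl a) →ₗ[K] Vx (hd a))

/-- `U` is a subrepresentation of the representation `(Vx, Va)`. -/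
def IsSubrep (U : ∀ x, Submodule K (Vx x)) : Prop :=
  ∀ a : Q₁, (U (tl a)).map (Va a) ≤ U (hd a)

/-- `U` is an epimorphic subrepresentation: `V_a(U_{ta}) = U_{ha}` for every arrow. -/
def IsEpiSub (U : ∀ x, Submodule K (Vx x)) : Prop :=
  ∀ a : Q₁, (U (tl a)).map (Va a) = U (hd a)

/-- `N` is a coclosed subrepresentation: it is a subrepresentation and
`V_a⁻¹(N_{ha}) ⊆ N_{ta}` for every arrow. -/
def IsCoclosedSub (N : ∀ x, Submodule K (Vx x)) : Prop :=
  IsSubrep tl hd Vx Va N ∧ ∀ a : Q₁, (N (hd a)).comap (Va a) ≤ N (tl a)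

/-- `Γ(V)`, the sum of all epimorphic subrepresentations. -/
def Gamma (x : Q₀) : Submodule K (Vx x) :=
  ⨆ U : {U : ∀ y, Submodule K (Vx y) // IsEpiSub tl hd Vx Va U}, U.1 x

/-- `Δ(V)`, the intersection of all coclosed subrepresentations. -/
def Delta (x : Q₀) : Submodule K (Vx x) :=
  ⨅ N : {N : ∀ y, Submodule K (Vx y) // IsCoclosedSub tl hd Vx Va N}, N.1 x

lemma le_gamma {U : ∀ y, Submodule K (Vx y)} (hU : IsEpiSub tl hd Vx Va U) (x : Q₀) :
    U x ≤ Gamma tl hd Vx Va x :=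
  le_iSup (fun (W : {U // IsEpiSub tl hd Vx Va U}) => W.1 x) ⟨U, hU⟩

lemma delta_le {N : ∀ y, Submodule K (Vx y)} (hN : IsCoclosedSub tl hd Vx Va N) (x : Q₀) :
    Delta tl hd Vx Va x ≤ N x :=
  iInf_le (fun (W : {N // IsCoclosedSub tl hd Vx Va N}) => W.1 x) ⟨N, hN⟩

lemma gamma_epi : IsEpiSub tl hd Vx Va (Gamma tl hd Vx Va) := by
  intro a
  apply le_antisymm
  · rw [Gamma, Submodule.map_iSup]
    refine iSup_le fun U => ?_
    rw [U.2 a]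
    exact le_gamma tl hd Vx Va U.2 (hd a)
  · refine iSup_le fun U => ?_
    rw [← U.2 a]
    exact Submodule.map_mono (le_gamma tl hd Vx Va U.2 (tl a))

lemma gamma_subrep : IsSubrep tl hd Vx Va (Gamma tl hd Vx Va) :=
  fun a => le_of_eq (gamma_epi tl hd Vx Va a)

lemma delta_subrep : IsSubrep tl hd Vx Va (Delta tl hd Vx Va) := by
  intro a
  have : ∀ N : {N // IsCoclosedSub tl hd Vx Va N},
      (Delta tl hd Vx Va (tl a)).map (Va a) ≤ N.1 (hd a) :=
    fun N => le_trans (Submodule.map_mono (delta_le tl hd Vx Va N.2 (tl a))) (N.2.1 a)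
  exact le_iInf this

/-- `Γ(V) + Δ(V)` pointwise. -/
abbrev GD (x : Q₀) : Submodule K (Vx x) := Gamma tl hd Vx Va x ⊔ Delta tl hd Vx Va x

/-- `Δ(V)`, seen inside `Γ(V) + Δ(V)`. -/
abbrev rkfDen (x : Q₀) : Submodule K (GD tl hd Vx Va x) :=
  (Delta tl hd Vx Va x).comap (GD tl hd Vx Va x).subtype

/-- The vertex spaces `(Γ(V)_x + Δ(V)_x)/Δ(V)_x` of the global tensor functor. -/
abbrev rkfSpace (x : Q₀) : Type :=
  GD tl hd Vx Va x ⧸ rkfDen tl hd Vx Va x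

lemma gd_mapsTo (a : Q₁) : ∀ v ∈ GD tl hd Vx Va (tl a), Va a v ∈ GD tl hd Vx Va (hd a) := by
  intro v hv
  have : (GD tl hd Vx Va (tl a)).map (Va a) ≤ GD tl hd Vx Va (hd a) := by
    rw [Submodule.map_sup]
    exact sup_le_sup (gamma_subrep tl hd Vx Va a) (delta_subrep tl hd Vx Va a)
  exact this ⟨v, hv, rfl⟩

/-- The arrow maps of the global tensor functor, induced by the `V_a`. -/
def rkfMap (a : Q₁) : rkfSpace tl hd Vx Va (tl a) →ₗ[K] rkfSpace tl hd Vx Va (hd a) :=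
  Submodule.liftQ _
    ((rkfDen tl hd Vx Va (hd a)).mkQ ∘ₗ (Va a).restrict (gd_mapsTo tl hd Vx Va a))
    (by
      intro v hv
      simp only [LinearMap.mem_ker, LinearMap.comp_apply, Submodule.mkQ_apply,
        Submodule.Quotient.mk_eq_zero]
      have hv' : (v : Vx (tl a)) ∈ Delta tl hd Vx Va (tl a) := hv
      show (Va a) (v : Vx (tl a)) ∈ Delta tl hd Vx Va (hd a)
      exact delta_subrep tl hd Vx Va a ⟨(v : Vx (tl a)), hv', rfl⟩)

/-- Isomorphism of quiver representations. -/
def RepIso (Wx : Q₀ → Type) [∀ x, AddCommGroup (Wx x)] [∀ x, Module K (Wx x)]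
    (Wa : ∀ a : Q₁, Wx (tl a) →ₗ[K] Wx (hd a)) : Prop :=
  ∃ φ : ∀ x, Vx x ≃ₗ[K] Wx x, ∀ (a : Q₁) (v : Vx (tl a)), φ (hd a) (Va a v) = Wa a (φ (tl a) v)

end Defs

section Indec

variable {K : Type} [Field K]
variable {Q₀ Q₁ : Type} (tl hd : Q₁ → Q₀)

/-- The zero representation: every vertex space is trivial. -/
def RepZero (Wx : Q₀ → Type) [∀ x, AddCommGroup (Wx x)] [∀ x, Module K (Wx x)] : Prop :=
  ∀ (x : Q₀) (w : Wx x), w = 0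

/-- A representation is indecomposable if it is nonzero and any decomposition of it as a
direct sum of two representations has a zero summand. -/
def Indecomposable (Vx : Q₀ → Type) [∀ x, AddCommGroup (Vx x)] [∀ x, Module K (Vx x)]
    (Va : ∀ a : Q₁, Vx (tl a) →ₗ[K] Vx (hd a)) : Prop :=
  ¬ RepZero (K := K) Vx ∧
  ∀ (Ux Wx : Q₀ → Type) [∀ x, AddCommGroup (Ux x)] [∀ x, Module K (Ux x)]
    [∀ x, AddCommGroup (Wx x)] [∀ x, Module K (Wx x)]
    (Ua : ∀ a : Q₁, Ux (tl a) →ₗ[K] Ux (hd a))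
    (Wa : ∀ a : Q₁, Wx (tl a) →ₗ[K] Wx (hd a)),
    RepIso tl hd Vx Va (fun x => Ux x × Wx x) (fun a => (Ua a).prodMap (Wa a)) →
    RepZero (K := K) Ux ∨ RepZero (K := K) Wx

end Indec

/-!
A subrepresentation is coclosed exactly when its annihilator in the dual representation is
epimorphic. So along an arrow `a`, in either direction, one can transport both vectors of `Γ(V)` and
functionals killing `Δ(V)`; since functionals are pulled back along `V_a`, the value of the pairing
does not change. If `rkf(V) ≠ 0`, some `v ∈ Γ(V)_x` and some `f` killing `Δ(V)_x` satisfy `f v = 1`.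
On a tree the choices made along the edges never conflict, so `(v, f)` extends to compatible
families over all vertices. The lines spanned by the vectors and the kernels of the functionals
split `V` into a copy of `𝟙_Q` and a complement, which vanishes when `V` is indecomposable.
-/

section LinearAlgebra

variable {K V W : Type*} [Field K] [AddCommGroup V] [Module K V] [AddCommGroup W] [Module K W]

lemma map_dualMap_dualAnnihilator (A : V →ₗ[K] W) (M : Submodule K W) :
    M.dualAnnihilator.map A.dualMap = (M.comap A).dualAnnihilator := by
  rw [← M.range_dualMap_mkQ_eq, ← LinearMap.range_comp, LinearMap.dualMap_comp_dualMap,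
    LinearMap.range_dualMap_eq_dualAnnihilator_ker, LinearMap.ker_comp, M.ker_mkQ]

lemma isCompl_ker_span_singleton {f : Module.Dual K V} {v : V} (hfv : f v ≠ 0) :
    IsCompl (LinearMap.ker f) (K ∙ v) :=
  isCompl_span_singleton_of_isCoatom_of_notMem
    (LinearMap.isCoatom_ker_of_surjective <| LinearMap.surjective fun hf => hfv (by simp [hf]))
    hfv

end LinearAlgebra

section Trees

section SimpleGraph

variable {V : Type*} {G : SimpleGraph V} {F : V → Type*}

lemma eq_cons_or_eq_cons_of_isAcyclic (hG : G.IsAcyclic) {u v r : V} (h : G.Adj u v)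
    {p : G.Walk u r} {q : G.Walk v r} (hp : p.IsPath) (hq : q.IsPath) :
    p = .cons h q ∨ q = .cons h.symm p := by
  by_cases hu : u ∈ q.support
  · right
    have := hG.path_concat hp.reverse hq.reverse h (by simpa using hu)
    simpa using congrArg SimpleGraph.Walk.reverse this
  · left
    have hcons : (SimpleGraph.Walk.cons h q).IsPath := hq.cons hu
    exact congrArg Subtype.val ((hG.subsingleton_path u r).elim ⟨p, hp⟩ ⟨_, hcons⟩)

/-- Transport of an element of the fibre over the end of a walk back to the fibre over its start,
one edge at a time. The direction is chosen so that the recursion follows `SimpleGraph.Walk`. -/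
def transportBack (step : ∀ u v, G.Adj u v → F u → F v) : ∀ {u v}, G.Walk u v → F v → F u
  | _, _, .nil, p => p
  | _, _, .cons h w, p => step _ _ h.symm (transportBack step w p)

lemma exists_section_of_isTree (hG : G.IsTree) {R : ∀ u v, F u → F v → Prop}
    (hR : ∀ u v, G.Adj u v → ∀ p, ∃ q, R u v p q) (r : V) (p : F r) :
    ∃ s : ∀ v, F v, s r = p ∧ ∀ u v, G.Adj u v → R u v (s u) (s v) ∨ R v u (s v) (s u) := by
  choose step hstep using hR
  choose path hpath hunique using fun v => hG.existsUnique_path v r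
  refine ⟨fun v => transportBack step (path v) p, ?_, fun u v h => ?_⟩
  · simp only [← hunique r .nil .nil, transportBack]
  · rcases eq_cons_or_eq_cons_of_isAcyclic hG.isAcyclic h (hpath u) (hpath v) with huv | hvu
    · right
      simp only [huv, transportBack]
      exact hstep v u h.symm _
    · left
      simp only [hvu, transportBack]
      exact hstep u v h _

end SimpleGraph

variable {Q₀ Q₁ : Type*} {tl hd : Q₁ → Q₀}

/-- The underlying simple graph of a quiver: orientations, loops and multiplicities of arrows are
forgotten. -/
def underlyingGraph (tl hd : Q₁ → Q₀) : SimpleGraph Q₀ :=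
  SimpleGraph.fromEdgeSet (Set.range fun a => s(tl a, hd a))

/-- A quiver, possibly infinite, is a tree if its underlying undirected multigraph is one. Since
`underlyingGraph` is simple, loops and parallel arrows are excluded separately. -/
structure IsTreeQuiver (tl hd : Q₁ → Q₀) : Prop where
  isTree : (underlyingGraph tl hd).IsTree
  tl_ne_hd (a : Q₁) : tl a ≠ hd a
  injective_edge : Function.Injective fun a => s(tl a, hd a)

lemma underlyingGraph_connected [Nonempty Q₀]
    (hconn : ∀ x y : Q₀, Relation.ReflTransGen
      (fun u v => ∃ a : Q₁, (tl a = u ∧ hd a = v) ∨ (hd a = u ∧ tl a = v)) x y) :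
    (underlyingGraph tl hd).Connected := by
  refine ⟨fun x y => ?_⟩
  induction hconn x y with
  | refl => exact .rfl
  | @tail u v _ huv ih =>
    by_cases hne : u = v
    · exact hne ▸ ih
    · have hadj : (underlyingGraph tl hd).Adj u v := by
        simpa [underlyingGraph, hne, and_comm] using huv
      exact ih.trans hadj.reachable

lemma isTreeQuiver_of_connected_of_card [Finite Q₁] (hconn : (underlyingGraph tl hd).Connected)
    (hcard : Nat.card Q₀ = Nat.card Q₁ + 1) : IsTreeQuiver tl hd := by
  have : Finite Q₀ := Nat.finite_of_card_ne_zero (by lia)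
  let edge : Q₁ → Sym2 Q₀ := fun a => s(tl a, hd a)
  have hsub : (underlyingGraph tl hd).edgeSet ⊆ Set.range edge := by
    simp [underlyingGraph, edge]
  have hedgeSet : Nat.card Q₁ ≤ Nat.card (underlyingGraph tl hd).edgeSet := by
    have := hconn.card_vert_le_card_edgeSet_add_one
    lia
  have hrange_le : Nat.card (Set.range edge) ≤ Nat.card Q₁ := Finite.card_range_le edge
  have hrange : (underlyingGraph tl hd).edgeSet = Set.range edge :=
    Set.eq_of_subset_of_ncard_le hsub (hrange_le.trans hedgeSet)
  have hcard_range : Nat.card (Set.range edge) = Nat.card Q₁ :=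
    hrange_le.antisymm (hrange ▸ hedgeSet)
  refine ⟨SimpleGraph.isTree_iff_connected_and_card.2 ⟨hconn, ?_⟩, fun a => ?_, ?_⟩
  · rw [hrange, hcard_range, hcard]
  · have : edge a ∈ (underlyingGraph tl hd).edgeSet := hrange ▸ Set.mem_range_self a
    exact ((SimpleGraph.mem_edgeSet _).1 this).ne
  · have := (Nat.bijective_iff_surjective_and_card (Set.rangeFactorization edge)).2
      ⟨Set.rangeFactorization_surjective, hcard_range.symm⟩
    exact Set.rangeFactorization_injective.1 this.injective

lemma IsTreeQuiver.exists_section (hQ : IsTreeQuiver tl hd) {F : Q₀ → Type*}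
    {R : ∀ a, F (tl a) → F (hd a) → Prop}
    (hfwd : ∀ a p, ∃ q, R a p q) (hbwd : ∀ a q, ∃ p, R a p q) (r : Q₀) (p : F r) :
    ∃ s : ∀ x, F x, s r = p ∧ ∀ a, R a (s (tl a)) (s (hd a)) := by
  let related (u v : Q₀) (p : F u) (q : F v) : Prop :=
    ∀ a (hu : tl a = u) (hv : hd a = v), R a (hu ▸ p) (hv ▸ q)
  have hrelated {a : Q₁} {p : F (tl a)} {q : F (hd a)} (hpq : R a p q) :
      related (tl a) (hd a) p q ∧ related (hd a) (tl a) q p := by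
    refine ⟨fun b hu hv => ?_, fun b hu hv => ?_⟩
    · obtain rfl : b = a := hQ.injective_edge (Sym2.eq_iff.2 (.inl ⟨hu, hv⟩))
      exact hpq
    · obtain rfl : b = a := hQ.injective_edge (Sym2.eq_iff.2 (.inr ⟨hu, hv⟩))
      exact absurd hu (hQ.tl_ne_hd b)
  have htotal (u v) (h : (underlyingGraph tl hd).Adj u v) (p : F u) :
      ∃ q, related u v p q ∧ related v u q p := by
    obtain ⟨⟨a, ha⟩, -⟩ := (SimpleGraph.fromEdgeSet_adj _).1 h
    rcases Sym2.eq_iff.1 ha with ⟨rfl, rfl⟩ | ⟨rfl, rfl⟩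
    · exact (hfwd a p).imp fun q hpq => hrelated hpq
    · exact (hbwd a p).imp fun q hqp => (hrelated hqp).symm
  obtain ⟨s, hsr, hs⟩ := exists_section_of_isTree hQ.isTree htotal r p
  refine ⟨s, hsr, fun a => ?_⟩
  have hadj : (underlyingGraph tl hd).Adj (tl a) (hd a) :=
    (SimpleGraph.fromEdgeSet_adj _).2 ⟨⟨a, rfl⟩, hQ.tl_ne_hd a⟩
  rcases hs _ _ hadj with h | h
  exacts [h.1 a rfl rfl, h.2 a rfl rfl]

end Trees

section Representations

variable {K : Type} [Field K] {Q₀ Q₁ : Type} {tl hd : Q₁ → Q₀}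
variable {Vx : Q₀ → Type} [∀ x, AddCommGroup (Vx x)] [∀ x, Module K (Vx x)]
variable {Va : ∀ a : Q₁, Vx (tl a) →ₗ[K] Vx (hd a)}

lemma delta_coclosed : IsCoclosedSub tl hd Vx Va (Delta tl hd Vx Va) :=
  ⟨delta_subrep tl hd Vx Va, fun a _ hv =>
    (mem_iInf _).2 fun N => N.2.2 a ((mem_iInf _).1 hv N)⟩

lemma IsCoclosedSub.comap_eq {N : ∀ x, Submodule K (Vx x)} (hN : IsCoclosedSub tl hd Vx Va N)
    (a : Q₁) : (N (hd a)).comap (Va a) = N (tl a) :=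
  (hN.2 a).antisymm (map_le_iff_le_comap.1 (hN.1 a))

lemma gamma_eq_top (hVa : ∀ a, Function.Surjective (Va a)) (x : Q₀) :
    Gamma tl hd Vx Va x = ⊤ :=
  top_le_iff.1 <| le_gamma tl hd Vx Va (U := fun _ => ⊤)
    (fun a => (Submodule.map_top _).trans (LinearMap.range_eq_top.2 (hVa a))) x

lemma delta_eq_bot (hVa : ∀ a, Function.Injective (Va a)) (x : Q₀) :
    Delta tl hd Vx Va x = ⊥ :=
  le_bot_iff.1 <| delta_le tl hd Vx Va (N := fun _ => ⊥)
    ⟨fun _ => (Submodule.map_bot _).le, fun a => (LinearMap.ker_eq_bot.2 (hVa a)).le⟩ x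

lemma repZero_rkfSpace_iff :
    RepZero (K := K) (rkfSpace tl hd Vx Va) ↔ ∀ x, Gamma tl hd Vx Va x ≤ Delta tl hd Vx Va x := by
  refine forall_congr' fun x => ?_
  calc (∀ w : rkfSpace tl hd Vx Va x, w = 0)
      ↔ Subsingleton (rkfSpace tl hd Vx Va x) := subsingleton_iff_forall_eq 0 |>.symm
    _ ↔ rkfDen tl hd Vx Va x = ⊤ := Submodule.Quotient.subsingleton_iff
    _ ↔ Gamma tl hd Vx Va x ≤ Delta tl hd Vx Va x := by
      rw [comap_subtype_eq_top, sup_le_iff, and_iff_left le_rfl]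

lemma RepIso.bijective {Wx : Q₀ → Type} [∀ x, AddCommGroup (Wx x)] [∀ x, Module K (Wx x)]
    {Wa : ∀ a : Q₁, Wx (tl a) →ₗ[K] Wx (hd a)} (h : RepIso tl hd Vx Va Wx Wa) {a : Q₁}
    (hWa : Function.Bijective (Wa a)) : Function.Bijective (Va a) := by
  obtain ⟨φ, hφ⟩ := h
  have hcomm : φ (hd a) ∘ Va a = Wa a ∘ φ (tl a) := funext (hφ a)
  rw [← (φ (hd a)).bijective.of_comp_iff', hcomm]
  exact hWa.comp (φ (tl a)).bijective

lemma Indecomposable.eq_bot_or_eq_bot_of_isCompl (hV : Indecomposable tl hd Vx Va)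
    {U W : ∀ x, Submodule K (Vx x)} (hU : IsSubrep tl hd Vx Va U) (hW : IsSubrep tl hd Vx Va W)
    (hUW : ∀ x, IsCompl (U x) (W x)) : (∀ x, U x = ⊥) ∨ ∀ x, W x = ⊥ := by
  have eq_bot_of_repZero {S : ∀ x, Submodule K (Vx x)}
      (hS : RepZero (K := K) fun x => S x) (x : Q₀) : S x = ⊥ :=
    (Submodule.eq_bot_iff _).2 fun v hv => congrArg Subtype.val (hS x ⟨v, hv⟩)
  have hUa (a : Q₁) : ∀ v ∈ U (tl a), Va a v ∈ U (hd a) := map_le_iff_le_comap.1 (hU a)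
  have hWa (a : Q₁) : ∀ v ∈ W (tl a), Va a v ∈ W (hd a) := map_le_iff_le_comap.1 (hW a)
  refine (hV.2 (fun x => U x) (fun x => W x) (fun a => (Va a).restrict (hUa a))
    (fun a => (Va a).restrict (hWa a))
    ⟨fun x => (prodEquivOfIsCompl _ _ (hUW x)).symm, fun a v => ?_⟩).imp
    eq_bot_of_repZero eq_bot_of_repZero
  obtain ⟨⟨u, w⟩, rfl⟩ := (prodEquivOfIsCompl _ _ (hUW (tl a))).surjective v
  rw [LinearEquiv.symm_apply_apply, LinearEquiv.symm_apply_eq]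
  exact map_add (Va a) u.1 w.1

/-- A family of pairs `(v x, f x)` of a vector and a functional splits `𝟙_Q` off `V`: the vectors
define a morphism `𝟙_Q ⟶ V`, the functionals a morphism `V ⟶ 𝟙_Q`, and their composite is the
identity of `𝟙_Q`. -/
structure IsIdentitySplitting (Va : ∀ a : Q₁, Vx (tl a) →ₗ[K] Vx (hd a))
    (v : ∀ x, Vx x) (f : ∀ x, Module.Dual K (Vx x)) : Prop where
  map_vector (a : Q₁) : Va a (v (tl a)) = v (hd a)
  functional_comp (a : Q₁) : f (hd a) ∘ₗ Va a = f (tl a)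
  apply_vector (x : Q₀) : f x (v x) = 1

lemma Indecomposable.repIso_identity (hV : Indecomposable tl hd Vx Va) {v : ∀ x, Vx x}
    {f : ∀ x, Module.Dual K (Vx x)} (h : IsIdentitySplitting Va v f) :
    RepIso tl hd Vx Va (fun _ => K) (fun _ => LinearMap.id) := by
  have hne (x : Q₀) : f x (v x) ≠ 0 := h.apply_vector x ▸ one_ne_zero
  have hker : IsSubrep tl hd Vx Va fun x => LinearMap.ker (f x) := fun a => by
    rw [map_le_iff_le_comap, ← LinearMap.ker_comp, h.functional_comp]
  have hspan : IsSubrep tl hd Vx Va fun x => K ∙ v x := fun a => by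
    rw [map_span, Set.image_singleton, h.map_vector]
  rcases hV.eq_bot_or_eq_bot_of_isCompl hker hspan fun x => isCompl_ker_span_singleton (hne x)
    with hker_bot | hspan_bot
  · have hbij (x : Q₀) : Function.Bijective (f x) :=
      ⟨LinearMap.ker_eq_bot.1 (hker_bot x), LinearMap.surjective fun hf => hne x (by simp [hf])⟩
    exact ⟨fun x => .ofBijective (f x) (hbij x), fun a => LinearMap.congr_fun (h.functional_comp a)⟩
  · obtain ⟨x, -⟩ := not_forall.1 hV.1
    have hv : v x = 0 := span_singleton_eq_bot.1 (hspan_bot x)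
    exact absurd (by rw [hv, map_zero]) (hne x)

/-- The pairs of a vector of `Γ(V)_x` and a functional killing `Δ(V)_x` whose value on the vector is
`1`. They are the values at `x` of the identity splittings sought in `V`. -/
def unitPairs (Va : ∀ a : Q₁, Vx (tl a) →ₗ[K] Vx (hd a)) (x : Q₀) :
    Set (Vx x × Module.Dual K (Vx x)) :=
  {p | p.1 ∈ Gamma tl hd Vx Va x ∧ p.2 ∈ (Delta tl hd Vx Va x).dualAnnihilator ∧ p.2 p.1 = 1}

lemma unitPairs_nonempty {x : Q₀} (hx : ¬ Gamma tl hd Vx Va x ≤ Delta tl hd Vx Va x) :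
    (unitPairs Va x).Nonempty := by
  obtain ⟨v, hvΓ, hvΔ⟩ := SetLike.not_le_iff_exists.1 hx
  obtain ⟨f, hfv, hfΔ⟩ := exists_le_ker_of_notMem hvΔ
  refine ⟨(v, (f v)⁻¹ • f), hvΓ, ?_, inv_mul_cancel₀ hfv⟩
  exact smul_mem _ _ ((mem_dualAnnihilator f).2 fun w hw => hfΔ hw)

lemma map_delta_dualAnnihilator (a : Q₁) :
    (Delta tl hd Vx Va (hd a)).dualAnnihilator.map (Va a).dualMap =
      (Delta tl hd Vx Va (tl a)).dualAnnihilator := by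
  rw [map_dualMap_dualAnnihilator, delta_coclosed.comap_eq]

lemma exists_unitPairs_hd (a : Q₁) {p} (hp : p ∈ unitPairs Va (tl a)) :
    ∃ q ∈ unitPairs Va (hd a), Va a p.1 = q.1 ∧ q.2 ∘ₗ Va a = p.2 := by
  obtain ⟨v, f⟩ := p
  obtain ⟨hv, hf, hfv⟩ := hp
  obtain ⟨g, hg, rfl⟩ := (map_delta_dualAnnihilator a).ge hf
  exact ⟨(Va a v, g), ⟨gamma_subrep tl hd Vx Va a (mem_map_of_mem hv), hg, hfv⟩, rfl, rfl⟩

lemma exists_unitPairs_tl (a : Q₁) {q} (hq : q ∈ unitPairs Va (hd a)) :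
    ∃ p ∈ unitPairs Va (tl a), Va a p.1 = q.1 ∧ q.2 ∘ₗ Va a = p.2 := by
  obtain ⟨w, g⟩ := q
  obtain ⟨hw, hg, hgw⟩ := hq
  obtain ⟨v, hv, rfl⟩ := (gamma_epi tl hd Vx Va a).ge hw
  exact ⟨(v, g ∘ₗ Va a), ⟨hv, (map_delta_dualAnnihilator a).le (mem_map_of_mem hg), hgw⟩, rfl, rfl⟩

lemma IsTreeQuiver.exists_isIdentitySplitting (hQ : IsTreeQuiver tl hd) {x : Q₀}
    (hx : ¬ Gamma tl hd Vx Va x ≤ Delta tl hd Vx Va x) :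
    ∃ v f, IsIdentitySplitting Va v f := by
  obtain ⟨p, hp⟩ := unitPairs_nonempty hx
  obtain ⟨s, -, hs⟩ := hQ.exists_section (F := fun y => unitPairs Va y)
    (R := fun a p q => Va a p.1.1 = q.1.1 ∧ q.1.2 ∘ₗ Va a = p.1.2)
    (fun a p => let ⟨q, hq, hpq⟩ := exists_unitPairs_hd a p.2; ⟨⟨q, hq⟩, hpq⟩)
    (fun a q => let ⟨p, hp, hpq⟩ := exists_unitPairs_tl a q.2; ⟨⟨p, hp⟩, hpq⟩) x ⟨p, hp⟩
  exact ⟨fun y => (s y).1.1, fun y => (s y).1.2, fun a => (hs a).1, fun a => (hs a).2,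
    fun y => (s y).2.2.2⟩

lemma RepIso.not_repZero_rkfSpace (hV : ¬ RepZero (K := K) Vx)
    (h : RepIso tl hd Vx Va (fun _ => K) (fun _ => LinearMap.id)) :
    ¬ RepZero (K := K) (rkfSpace tl hd Vx Va) := by
  have hbij (a : Q₁) : Function.Bijective (Va a) := h.bijective Function.bijective_id
  intro hrkf
  refine hV fun x v => (mem_bot K).1 ?_
  have hΓΔ := repZero_rkfSpace_iff.1 hrkf x
  rw [gamma_eq_top fun a => (hbij a).surjective, delta_eq_bot fun a => (hbij a).injective] at hΓΔ
  exact hΓΔ mem_top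

end Representations

theorem stmt_12_general {K : Type} [Field K] {Q₀ Q₁ : Type} {tl hd : Q₁ → Q₀}
    (hQ : IsTreeQuiver tl hd)
    (Vx : Q₀ → Type) [∀ x, AddCommGroup (Vx x)] [∀ x, Module K (Vx x)]
    (Va : ∀ a : Q₁, Vx (tl a) →ₗ[K] Vx (hd a))
    (hV : Indecomposable tl hd Vx Va) :
    ¬ RepZero (K := K) (rkfSpace tl hd Vx Va) ↔
      RepIso tl hd Vx Va (fun _ => K) (fun _ => LinearMap.id) := by
  refine ⟨fun hrkf => ?_, RepIso.not_repZero_rkfSpace hV.1⟩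
  obtain ⟨x, hx⟩ := not_forall.1 (mt repZero_rkfSpace_iff.2 hrkf)
  obtain ⟨v, f, hvf⟩ := hQ.exists_isIdentitySplitting hx
  exact hV.repIso_identity hvf

/-- on a tree quiver, an indecomposable representation `V` has `rkf(V) ≠ 0`
iff `V` is isomorphic to the identity representation `𝟙_Q`. -/
theorem stmt_12 {K : Type} [Field K] {Q₀ Q₁ : Type} [Fintype Q₀] [Fintype Q₁]
    (tl hd : Q₁ → Q₀)
    (hconn : ∀ x y : Q₀, Relation.ReflTransGen
      (fun u v => ∃ a : Q₁, (tl a = u ∧ hd a = v) ∨ (hd a = u ∧ tl a = v)) x y)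
    (htree : Fintype.card Q₀ = Fintype.card Q₁ + 1)
    (Vx : Q₀ → Type) [∀ x, AddCommGroup (Vx x)] [∀ x, Module K (Vx x)]
    [∀ x, FiniteDimensional K (Vx x)]
    (Va : ∀ a : Q₁, Vx (tl a) →ₗ[K] Vx (hd a))
    (hV : Indecomposable tl hd Vx Va) :
    ¬ RepZero (K := K) (rkfSpace tl hd Vx Va) ↔
      RepIso tl hd Vx Va (fun _ => K) (fun _ => LinearMap.id) := by
  have : Nonempty Q₀ := Fintype.card_pos_iff.1 (by lia)
  exact stmt_12_general (isTreeQuiver_of_connected_of_card (underlyingGraph_connected hconn)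
    (by simpa using htree)) Vx Va hV
end

section
/- Let Q be the two-subspace quiver with vertices 1, 2, 3 and arrows a : 1 → 2 and b : 3 → 2, and let V be a representation of Q given by linear maps A : V_1 → V_2 and B : V_3 → V_2. Then for every vertex x, dim_K (rkf V)_x = dim_K (im A ∩ im B). In particular Γ(V) = (A⁻¹(im B), im A ∩ im B, B⁻¹(im A)) and Δ(V) = (ker A, 0, ker B). -/
open Submodule

/-- Vertices of the two-subspace quiver. -/
inductive S2V | v1 | v2 | v3

/-- Arrows of the two-subspace quiver: `a : 1 → 2`, `b : 3 → 2`. -/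
inductive S2A | a | b

/-- Tails. -/
def S2t : S2A → S2V | .a => .v1 | .b => .v3

/-- Heads. -/
def S2h : S2A → S2V | .a => .v2 | .b => .v2

section S2

variable {K : Type} [Field K]
variable (V1 V2 V3 : Type) [AddCommGroup V1] [AddCommGroup V2] [AddCommGroup V3]
  [Module K V1] [Module K V2] [Module K V3]

/-- Vertex spaces. -/
def S2Vx : S2V → Type | .v1 => V1 | .v2 => V2 | .v3 => V3

instance : ∀ x, AddCommGroup (S2Vx V1 V2 V3 x)
  | .v1 => ‹_› | .v2 => ‹_› | .v3 => ‹_›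

instance : ∀ x, Module K (S2Vx V1 V2 V3 x)
  | .v1 => ‹_› | .v2 => ‹_› | .v3 => ‹_›

variable (A : V1 →ₗ[K] V2) (B : V3 →ₗ[K] V2)

/-- Arrow maps. -/
def S2Va : ∀ ar : S2A, S2Vx V1 V2 V3 (S2t ar) →ₗ[K] S2Vx V1 V2 V3 (S2h ar)
  | .a => A | .b => B

end S2

/-!
`A : V₁ → V₂`, the identity of `V₂` and `B : V₃ → V₂` form a cocone over the representation with
apex `V₂`. At each vertex its kernel is `Δ(V)` and it maps `Γ(V)` onto `im A ∩ im B`, so it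
identifies `rkf V` with the constant representation on `im A ∩ im B`.
-/

section SupQuotient

variable {R M N : Type*} [Ring R] [AddCommGroup M] [AddCommGroup N] [Module R M] [Module R N]
variable (f : M →ₗ[R] N) {G D : Submodule R M} {P : Submodule R N}

/-- If `f` has kernel `D` and maps `G` onto `P`, it induces an isomorphism `(G + D)/D ≃ P`. The
quotient is by `D` viewed inside `G + D`, the shape in which `rkfSpace` is defined. -/
noncomputable def supQuotientEquivOfMapEq (hD : D = LinearMap.ker f) (hG : G.map f = P) :
    (↥(G ⊔ D) ⧸ D.comap (G ⊔ D).subtype) ≃ₗ[R] P :=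
  have map_sup_eq : (G ⊔ D).map f = P := by
    rw [Submodule.map_sup, hG, LinearMap.le_ker_iff_map.1 hD.le, sup_bot_eq]
  have mapsTo : ∀ v ∈ G ⊔ D, f v ∈ P := fun _ hv => map_sup_eq ▸ mem_map_of_mem hv
  have ker_restrict : D.comap (G ⊔ D).subtype = LinearMap.ker (f.restrict mapsTo) := by
    rw [LinearMap.ker_restrict, hD]
  have surjective : Function.Surjective (f.restrict mapsTo) := by
    rintro ⟨w, hw⟩
    obtain ⟨v, hv, rfl⟩ := map_sup_eq ▸ hw
    exact ⟨⟨v, hv⟩, rfl⟩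
  (quotEquivOfEq _ _ ker_restrict).trans ((f.restrict mapsTo).quotKerEquivOfSurjective surjective)

lemma supQuotientEquivOfMapEq_mk (hD : D = LinearMap.ker f) (hG : G.map f = P) (v : ↥(G ⊔ D)) :
    (supQuotientEquivOfMapEq f hD hG (Submodule.Quotient.mk v) : N) = f v :=
  rfl

end SupQuotient

section Quiver

variable {K : Type} [Field K] {Q₀ Q₁ : Type} (tl hd : Q₁ → Q₀)
variable (Vx : Q₀ → Type) [∀ x, AddCommGroup (Vx x)] [∀ x, Module K (Vx x)]
variable (Va : ∀ a : Q₁, Vx (tl a) →ₗ[K] Vx (hd a))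

lemma gamma_hd_le_range (a : Q₁) : Gamma tl hd Vx Va (hd a) ≤ LinearMap.range (Va a) :=
  (gamma_epi tl hd Vx Va a).ge.trans LinearMap.map_le_range

lemma isCoclosedSub_iff_comap_eq {N : ∀ x, Submodule K (Vx x)} :
    IsCoclosedSub tl hd Vx Va N ↔ ∀ a, (N (hd a)).comap (Va a) = N (tl a) := by
  simp only [IsCoclosedSub, IsSubrep, map_le_iff_le_comap, le_antisymm_iff, forall_and, and_comm]

lemma ker_le_delta_tl (a : Q₁) : LinearMap.ker (Va a) ≤ Delta tl hd Vx Va (tl a) :=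
  le_iInf fun N => (LinearMap.ker_le_comap (Va a)).trans (N.2.2 a)

theorem rkf_repIso_const {W : Type} [AddCommGroup W] [Module K W] {P : Submodule K W}
    (f : ∀ x, Vx x →ₗ[K] W) (cocone : ∀ a, f (hd a) ∘ₗ Va a = f (tl a))
    (delta_eq_ker : ∀ x, Delta tl hd Vx Va x = LinearMap.ker (f x))
    (map_gamma : ∀ x, (Gamma tl hd Vx Va x).map (f x) = P) :
    RepIso tl hd (rkfSpace tl hd Vx Va) (rkfMap tl hd Vx Va) (fun _ => P)
      (fun _ => LinearMap.id) := by
  refine ⟨fun x => supQuotientEquivOfMapEq (f x) (delta_eq_ker x) (map_gamma x), fun a q => ?_⟩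
  obtain ⟨v, rfl⟩ := Submodule.Quotient.mk_surjective _ q
  have induced_eq_apply := fun x => supQuotientEquivOfMapEq_mk (f x) (delta_eq_ker x) (map_gamma x)
  refine Subtype.ext ((induced_eq_apply (hd a) _).trans ?_)
  rw [LinearMap.id_apply, induced_eq_apply]
  exact LinearMap.congr_fun (cocone a) (v : Vx (tl a))

end Quiver

section TwoSubspace

variable {K : Type} [Field K]
variable {V1 V2 V3 : Type} [AddCommGroup V1] [AddCommGroup V2] [AddCommGroup V3]
  [Module K V1] [Module K V2] [Module K V3]

/-- The family of subspaces `(U₁, U₂, U₃)` of a representation of the two-subspace quiver. -/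
def S2Sub (U1 : Submodule K V1) (U2 : Submodule K V2) (U3 : Submodule K V3) :
    ∀ x, Submodule K (S2Vx V1 V2 V3 x)
  | .v1 => U1 | .v2 => U2 | .v3 => U3

variable (A : V1 →ₗ[K] V2) (B : V3 →ₗ[K] V2)

/-- The cocone `(A, id, B)` from the representation to its space at the sink vertex. -/
def S2ToSink : ∀ x, S2Vx V1 V2 V3 x →ₗ[K] V2
  | .v1 => A | .v2 => LinearMap.id | .v3 => B

lemma S2ToSink_comp_S2Va (ar : S2A) :
    S2ToSink A B (S2h ar) ∘ₗ S2Va V1 V2 V3 A B ar = S2ToSink A B (S2t ar) := by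
  cases ar <;> rfl

variable {A B} in
lemma isEpiSub_S2Sub_iff {U1 : Submodule K V1} {U2 : Submodule K V2} {U3 : Submodule K V3} :
    IsEpiSub S2t S2h (S2Vx V1 V2 V3) (S2Va V1 V2 V3 A B) (S2Sub U1 U2 U3) ↔
      U1.map A = U2 ∧ U3.map B = U2 :=
  ⟨fun h => ⟨h .a, h .b⟩, fun h => S2A.rec h.1 h.2⟩

variable {A B} in
lemma isCoclosedSub_S2Sub_iff {U1 : Submodule K V1} {U2 : Submodule K V2} {U3 : Submodule K V3} :
    IsCoclosedSub S2t S2h (S2Vx V1 V2 V3) (S2Va V1 V2 V3 A B) (S2Sub U1 U2 U3) ↔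
      U2.comap A = U1 ∧ U2.comap B = U3 :=
  (isCoclosedSub_iff_comap_eq ..).trans ⟨fun h => ⟨h .a, h .b⟩, fun h => S2A.rec h.1 h.2⟩

theorem gamma_S2_eq : Gamma S2t S2h (S2Vx V1 V2 V3) (S2Va V1 V2 V3 A B) =
    S2Sub ((LinearMap.range B).comap A) (LinearMap.range A ⊓ LinearMap.range B)
      ((LinearMap.range A).comap B) := by
  have sub_epi := isEpiSub_S2Sub_iff.2
    ⟨map_comap_eq A (LinearMap.range B), (map_comap_eq B (LinearMap.range A)).trans (inf_comm ..)⟩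
  have sink_le_A := gamma_hd_le_range S2t S2h _ (S2Va V1 V2 V3 A B) .a
  have sink_le_B := gamma_hd_le_range S2t S2h _ (S2Va V1 V2 V3 A B) .b
  have gamma_sub := gamma_subrep S2t S2h _ (S2Va V1 V2 V3 A B)
  funext x
  refine le_antisymm ?_ (le_gamma S2t S2h _ _ sub_epi x)
  cases x with
  | v1 => exact map_le_iff_le_comap.1 ((gamma_sub .a).trans sink_le_B)
  | v2 => exact le_inf sink_le_A sink_le_B
  | v3 => exact map_le_iff_le_comap.1 ((gamma_sub .b).trans sink_le_A)

theorem delta_S2_eq : Delta S2t S2h (S2Vx V1 V2 V3) (S2Va V1 V2 V3 A B) =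
    S2Sub (LinearMap.ker A) ⊥ (LinearMap.ker B) := by
  have sub_coclosed := isCoclosedSub_S2Sub_iff.2 ⟨comap_bot A, comap_bot B⟩
  funext x
  refine le_antisymm (delta_le S2t S2h _ _ sub_coclosed x) ?_
  cases x with
  | v1 => exact ker_le_delta_tl S2t S2h _ (S2Va V1 V2 V3 A B) .a
  | v2 => exact bot_le (α := Submodule K V2)
  | v3 => exact ker_le_delta_tl S2t S2h _ (S2Va V1 V2 V3 A B) .b

lemma delta_S2_eq_ker_S2ToSink (x : S2V) :
    Delta S2t S2h (S2Vx V1 V2 V3) (S2Va V1 V2 V3 A B) x = LinearMap.ker (S2ToSink A B x) := by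
  rw [delta_S2_eq]
  cases x with
  | v1 => rfl
  | v2 => exact LinearMap.ker_id.symm
  | v3 => rfl

lemma map_S2ToSink_gamma_S2 (x : S2V) :
    (Gamma S2t S2h (S2Vx V1 V2 V3) (S2Va V1 V2 V3 A B) x).map (S2ToSink A B x) =
      LinearMap.range A ⊓ LinearMap.range B := by
  rw [gamma_S2_eq]
  cases x with
  | v1 => exact map_comap_eq A (LinearMap.range B)
  | v2 => exact Submodule.map_id _
  | v3 => exact (map_comap_eq B (LinearMap.range A)).trans (inf_comm ..)

end TwoSubspace

theorem stmt_16_general {K : Type} [Field K]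
    (V1 V2 V3 : Type) [AddCommGroup V1] [AddCommGroup V2] [AddCommGroup V3]
    [Module K V1] [Module K V2] [Module K V3]
    (A : V1 →ₗ[K] V2) (B : V3 →ₗ[K] V2) :
    RepIso S2t S2h (rkfSpace S2t S2h (S2Vx V1 V2 V3) (S2Va V1 V2 V3 A B))
      (rkfMap S2t S2h (S2Vx V1 V2 V3) (S2Va V1 V2 V3 A B))
      (fun _ => ↥(LinearMap.range A ⊓ LinearMap.range B)) (fun _ => LinearMap.id) ∧
    (Gamma S2t S2h (S2Vx V1 V2 V3) (S2Va V1 V2 V3 A B) .v1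
        = (LinearMap.range B).comap A ∧
      Gamma S2t S2h (S2Vx V1 V2 V3) (S2Va V1 V2 V3 A B) .v2
        = LinearMap.range A ⊓ LinearMap.range B ∧
      Gamma S2t S2h (S2Vx V1 V2 V3) (S2Va V1 V2 V3 A B) .v3
        = (LinearMap.range A).comap B) ∧
    (Delta S2t S2h (S2Vx V1 V2 V3) (S2Va V1 V2 V3 A B) .v1 = LinearMap.ker A ∧
      Delta S2t S2h (S2Vx V1 V2 V3) (S2Va V1 V2 V3 A B) .v2 = (⊥ : Submodule K V2) ∧
      Delta S2t S2h (S2Vx V1 V2 V3) (S2Va V1 V2 V3 A B) .v3 = LinearMap.ker B) := by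
  refine ⟨rkf_repIso_const S2t S2h _ _ (S2ToSink A B) (S2ToSink_comp_S2Va A B)
    (delta_S2_eq_ker_S2ToSink A B) (map_S2ToSink_gamma_S2 A B), ?_, ?_⟩
  · rw [gamma_S2_eq]
    exact ⟨rfl, rfl, rfl⟩
  · rw [delta_S2_eq]
    exact ⟨rfl, rfl, rfl⟩

/-- for the two-subspace quiver `1 → 2 ← 3` with representation
`(V₁, V₂, V₃; A, B)`: `dim (rkf V)_x = dim (im A ∩ im B)` for every vertex, with
`Γ(V) = (A⁻¹(im B), im A ∩ im B, B⁻¹(im A))` and `Δ(V) = (ker A, 0, ker B)`. -/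
theorem stmt_16 {K : Type} [Field K]
    (V1 V2 V3 : Type) [AddCommGroup V1] [AddCommGroup V2] [AddCommGroup V3]
    [Module K V1] [Module K V2] [Module K V3]
    [FiniteDimensional K V1] [FiniteDimensional K V2] [FiniteDimensional K V3]
    (A : V1 →ₗ[K] V2) (B : V3 →ₗ[K] V2) :
    (∀ x : S2V, Module.finrank K (rkfSpace S2t S2h (S2Vx V1 V2 V3) (S2Va V1 V2 V3 A B) x)
      = Module.finrank K ↥(LinearMap.range A ⊓ LinearMap.range B)) ∧
    (Gamma S2t S2h (S2Vx V1 V2 V3) (S2Va V1 V2 V3 A B) .v1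
        = (LinearMap.range B).comap A ∧
      Gamma S2t S2h (S2Vx V1 V2 V3) (S2Va V1 V2 V3 A B) .v2
        = LinearMap.range A ⊓ LinearMap.range B ∧
      Gamma S2t S2h (S2Vx V1 V2 V3) (S2Va V1 V2 V3 A B) .v3
        = (LinearMap.range A).comap B) ∧
    (Delta S2t S2h (S2Vx V1 V2 V3) (S2Va V1 V2 V3 A B) .v1 = LinearMap.ker A ∧
      Delta S2t S2h (S2Vx V1 V2 V3) (S2Va V1 V2 V3 A B) .v2 = (⊥ : Submodule K V2) ∧
      Delta S2t S2h (S2Vx V1 V2 V3) (S2Va V1 V2 V3 A B) .v3 = LinearMap.ker B) := by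
  obtain ⟨⟨φ, -⟩, gamma_delta_eq⟩ := stmt_16_general V1 V2 V3 A B
  exact ⟨fun x => (φ x).finrank_eq, gamma_delta_eq⟩
end
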